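/- A Banach algebra A is sequentially approximately contractible if and only if A is sequentially pseudo-amenable and has a bounded approximate identity. -/

import Mathlib

open Filter Topology TensorProduct

noncomputable section


open Filter Topology TensorProduct


/-! Banach bimodules and derivations -/

variable (A : Type) [NonUnitalNormedRing A] [NormedSpace ℂ A]
  [IsScalarTower ℂ A A] [SMulCommClass ℂ A A]

/-- A Banach `A`-bimodule structure on a Banach space `X`: `l a` is the left action of `a`,
`r a` is the right action of `a`. -/
structure BanachBimod (X : Type) [NormedAddCommGroup X] [NormedSpace ℂ X] where
  l : A → X →L[ℂ] X
  r : A → X →L[ℂ] X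
  l_add : ∀ a b, l (a + b) = l a + l b
  l_smul : ∀ (c : ℂ) a, l (c • a) = c • l a
  r_add : ∀ a b, r (a + b) = r a + r b
  r_smul : ∀ (c : ℂ) a, r (c • a) = c • r a
  l_bound : ∃ C : ℝ, ∀ a, ‖l a‖ ≤ C * ‖a‖
  r_bound : ∃ C : ℝ, ∀ a, ‖r a‖ ≤ C * ‖a‖
  l_mul : ∀ a b, l (a * b) = (l a).comp (l b)
  r_mul : ∀ a b, r (a * b) = (r b).comp (r a)
  lr_comm : ∀ a b, (l a).comp (r b) = (r b).comp (l a)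

variable {A}

namespace BanachBimod

variable {X : Type} [NormedAddCommGroup X] [NormedSpace ℂ X]

/-- The dual bimodule structure on `X →L[ℂ] ℂ`. -/
def dual (M : BanachBimod A X) : BanachBimod A (X →L[ℂ] ℂ) where
  l a := (ContinuousLinearMap.compL ℂ X X ℂ).flip (M.r a)
  r a := (ContinuousLinearMap.compL ℂ X X ℂ).flip (M.l a)
  l_add a b := by simp only [M.r_add, map_add]
  l_smul c a := by simp only [M.r_smul, map_smul]
  r_add a b := by simp only [M.l_add, map_add]
  r_smul c a := by simp only [M.l_smul, map_smul]
  l_bound := by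
    obtain ⟨C, hC⟩ := M.r_bound
    refine ⟨‖(ContinuousLinearMap.compL ℂ X X ℂ).flip‖ * C, fun a => ?_⟩
    calc ‖(ContinuousLinearMap.compL ℂ X X ℂ).flip (M.r a)‖
        ≤ ‖(ContinuousLinearMap.compL ℂ X X ℂ).flip‖ * ‖M.r a‖ :=
          (ContinuousLinearMap.compL ℂ X X ℂ).flip.le_opNorm _
      _ ≤ ‖(ContinuousLinearMap.compL ℂ X X ℂ).flip‖ * (C * ‖a‖) := by
          exact mul_le_mul_of_nonneg_left (hC a) (norm_nonneg _)
      _ = ‖(ContinuousLinearMap.compL ℂ X X ℂ).flip‖ * C * ‖a‖ := by ring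
  r_bound := by
    obtain ⟨C, hC⟩ := M.l_bound
    refine ⟨‖(ContinuousLinearMap.compL ℂ X X ℂ).flip‖ * C, fun a => ?_⟩
    calc ‖(ContinuousLinearMap.compL ℂ X X ℂ).flip (M.l a)‖
        ≤ ‖(ContinuousLinearMap.compL ℂ X X ℂ).flip‖ * ‖M.l a‖ :=
          (ContinuousLinearMap.compL ℂ X X ℂ).flip.le_opNorm _
      _ ≤ ‖(ContinuousLinearMap.compL ℂ X X ℂ).flip‖ * (C * ‖a‖) := by
          exact mul_le_mul_of_nonneg_left (hC a) (norm_nonneg _)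
      _ = ‖(ContinuousLinearMap.compL ℂ X X ℂ).flip‖ * C * ‖a‖ := by ring
  l_mul a b := by
    ext φ x
    simp [M.r_mul]
  r_mul a b := by
    ext φ x
    simp [M.l_mul]
  lr_comm a b := by
    ext φ x
    simpa using congrArg φ (congrFun (congrArg DFunLike.coe (M.lr_comm b a)) x)

/-- A continuous derivation from `A` into the bimodule `X`. -/
def IsDerivation (M : BanachBimod A X) (D : A →L[ℂ] X) : Prop :=
  ∀ a b, D (a * b) = M.l a (D b) + M.r b (D a)

/-- `D` is inner. -/
def Inner (M : BanachBimod A X) (D : A →L[ℂ] X) : Prop :=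
  ∃ x : X, ∀ a, D a = M.l a x - M.r a x

/-- `D` is approximately inner: some net of inner derivations converges to `D` pointwise
in norm. -/
def ApproxInner (M : BanachBimod A X) (D : A →L[ℂ] X) : Prop :=
  ∃ (ι : Type) (φ : Filter ι) (x : ι → X), φ.NeBot ∧
    ∀ a, Tendsto (fun i => M.l a (x i) - M.r a (x i)) φ (𝓝 (D a))

/-- `D` is sequentially approximately inner. -/
def SeqApproxInner (M : BanachBimod A X) (D : A →L[ℂ] X) : Prop :=
  ∃ x : ℕ → X, ∀ a, Tendsto (fun n => M.l a (x n) - M.r a (x n)) atTop (𝓝 (D a))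

/-- `D` is boundedly approximately inner: the approximating net of inner derivations is
bounded as a net of operators from `A` to `X`. -/
def BddApproxInner (M : BanachBimod A X) (D : A →L[ℂ] X) : Prop :=
  ∃ (ι : Type) (φ : Filter ι) (x : ι → X), φ.NeBot ∧
    (∃ C : ℝ, ∀ i a, ‖M.l a (x i) - M.r a (x i)‖ ≤ C * ‖a‖) ∧
    ∀ a, Tendsto (fun i => M.l a (x i) - M.r a (x i)) φ (𝓝 (D a))

/-- `D` is uniformly approximately inner: inner derivations approximate `D` uniformly
on the unit ball of `A`, i.e. in operator norm. -/
def UnifApproxInner (M : BanachBimod A X) (D : A →L[ℂ] X) : Prop :=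
  ∃ (ι : Type) (φ : Filter ι) (x : ι → X), φ.NeBot ∧
    ∀ ε > (0 : ℝ), ∀ᶠ i in φ, ∀ a, ‖D a - (M.l a (x i) - M.r a (x i))‖ ≤ ε * ‖a‖

/-- A derivation into the dual module `X →L[ℂ] ℂ` is weak* approximately inner. -/
def WeakStarApproxInner (M : BanachBimod A X) (D : A →L[ℂ] (X →L[ℂ] ℂ)) : Prop :=
  ∃ (ι : Type) (φ : Filter ι) (x : ι → (X →L[ℂ] ℂ)), φ.NeBot ∧
    ∀ (a : A) (ξ : X),
      Tendsto (fun i => (M.dual.l a (x i) - M.dual.r a (x i)) ξ) φ (𝓝 (D a ξ))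

end BanachBimod

variable (A)

/-- `A` is contractible: every continuous derivation into every Banach `A`-bimodule is inner. -/
def Contractible : Prop :=
  ∀ (X : Type) (_ : NormedAddCommGroup X) (_ : NormedSpace ℂ X) (M : BanachBimod A X)
    (D : A →L[ℂ] X), M.IsDerivation D → M.Inner D

def ApproximatelyContractible : Prop :=
  ∀ (X : Type) (_ : NormedAddCommGroup X) (_ : NormedSpace ℂ X) (M : BanachBimod A X)
    (D : A →L[ℂ] X), M.IsDerivation D → M.ApproxInner D

def SeqApproximatelyContractible : Prop :=
  ∀ (X : Type) (_ : NormedAddCommGroup X) (_ : NormedSpace ℂ X) (M : BanachBimod A X)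
    (D : A →L[ℂ] X), M.IsDerivation D → M.SeqApproxInner D

def UnifApproximatelyContractible : Prop :=
  ∀ (X : Type) (_ : NormedAddCommGroup X) (_ : NormedSpace ℂ X) (M : BanachBimod A X)
    (D : A →L[ℂ] X), M.IsDerivation D → M.UnifApproxInner D

def ApproximatelyAmenable : Prop :=
  ∀ (X : Type) (_ : NormedAddCommGroup X) (_ : NormedSpace ℂ X) (M : BanachBimod A X)
    (D : A →L[ℂ] (X →L[ℂ] ℂ)), M.dual.IsDerivation D → M.dual.ApproxInner D

def SeqApproximatelyAmenable : Prop :=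
  ∀ (X : Type) (_ : NormedAddCommGroup X) (_ : NormedSpace ℂ X) (M : BanachBimod A X)
    (D : A →L[ℂ] (X →L[ℂ] ℂ)), M.dual.IsDerivation D → M.dual.SeqApproxInner D

def BddApproximatelyAmenable : Prop :=
  ∀ (X : Type) (_ : NormedAddCommGroup X) (_ : NormedSpace ℂ X) (M : BanachBimod A X)
    (D : A →L[ℂ] (X →L[ℂ] ℂ)), M.dual.IsDerivation D → M.dual.BddApproxInner D

def WeakStarApproximatelyAmenable : Prop :=
  ∀ (X : Type) (_ : NormedAddCommGroup X) (_ : NormedSpace ℂ X) (M : BanachBimod A X)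
    (D : A →L[ℂ] (X →L[ℂ] ℂ)), M.dual.IsDerivation D → M.WeakStarApproxInner D


/-- The projective tensor "seminorm" on the algebraic tensor product `V ⊗[ℂ] W`, relative to
given (semi)norm functions on the factors: the infimum of `∑ να aₙ * νβ bₙ` over all
representations `t = ∑ aₙ ⊗ bₙ`. -/
def projTensorSN {V W : Type} [AddCommGroup V] [Module ℂ V] [AddCommGroup W] [Module ℂ W]
    (να : V → ℝ) (νβ : W → ℝ) (t : V ⊗[ℂ] W) : ℝ :=
  sInf {r : ℝ | ∃ L : List (V × W), t = (L.map fun p => p.1 ⊗ₜ[ℂ] p.2).sum ∧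
      r = (L.map fun p => να p.1 * νβ p.2).sum}

section SN

variable (C : Type) [NonUnitalRing C] [Module ℂ C] [IsScalarTower ℂ C C] [SMulCommClass ℂ C C]

/-- The left action `u ↦ a·u` of `C` on `C ⊗[ℂ] C`. -/
def tactL (a : C) : C ⊗[ℂ] C →ₗ[ℂ] C ⊗[ℂ] C :=
  TensorProduct.map (LinearMap.mulLeft ℂ a) LinearMap.id

/-- The right action `u ↦ u·a` of `C` on `C ⊗[ℂ] C`. -/
def tactR (a : C) : C ⊗[ℂ] C →ₗ[ℂ] C ⊗[ℂ] C :=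
  TensorProduct.map LinearMap.id (LinearMap.mulRight ℂ a)

/-- The multiplication map `π : C ⊗ C → C`. -/
def tpi : C ⊗[ℂ] C →ₗ[ℂ] C := LinearMap.mul' ℂ C

variable (ν : C → ℝ)

/-- Pseudo-amenability of the algebra `C` relative to the (semi)norm function `ν`:
there is an approximate diagonal, i.e. a net `(u_i) ⊂ C ⊗̂ C` with
`a·u_i − u_i·a → 0` (in the projective tensor seminorm) and `π(u_i)a → a` for all `a ∈ C`. -/
def PseudoAmenableSN : Prop :=
  ∃ (ι : Type) (φ : Filter ι) (u : ι → C ⊗[ℂ] C), φ.NeBot ∧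
    (∀ a : C, Tendsto (fun i => projTensorSN ν ν (tactL C a (u i) - tactR C a (u i))) φ (𝓝 0)) ∧
    (∀ a : C, Tendsto (fun i => ν (tpi C (u i) * a - a)) φ (𝓝 0))

/-- Sequential pseudo-amenability. -/
def SeqPseudoAmenableSN : Prop :=
  ∃ u : ℕ → C ⊗[ℂ] C,
    (∀ a : C, Tendsto (fun n => projTensorSN ν ν (tactL C a (u n) - tactR C a (u n))) atTop (𝓝 0)) ∧
    (∀ a : C, Tendsto (fun n => ν (tpi C (u n) * a - a)) atTop (𝓝 0))

/-- Pseudo-contractibility: there is a central approximate diagonal. -/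
def PseudoContractibleSN : Prop :=
  ∃ (ι : Type) (φ : Filter ι) (u : ι → C ⊗[ℂ] C), φ.NeBot ∧
    (∀ (a : C) i, tactL C a (u i) = tactR C a (u i)) ∧
    (∀ a : C, Tendsto (fun i => ν (tpi C (u i) * a - a)) φ (𝓝 0))

/-- Bounded pseudo-contractibility: a central approximate diagonal `(u_i)` such that
`(π(u_i))` is a multiplier-bounded approximate identity. -/
def BddPseudoContractibleSN : Prop :=
  ∃ (ι : Type) (φ : Filter ι) (u : ι → C ⊗[ℂ] C), φ.NeBot ∧
    (∀ (a : C) i, tactL C a (u i) = tactR C a (u i)) ∧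
    (∀ a : C, Tendsto (fun i => ν (tpi C (u i) * a - a)) φ (𝓝 0)) ∧
    (∃ K : ℝ, 0 < K ∧ ∀ i (a : C), ν (tpi C (u i) * a) ≤ K * ν a)

end SN

section Normed

variable (A : Type) [NonUnitalNormedRing A] [NormedSpace ℂ A]
  [IsScalarTower ℂ A A] [SMulCommClass ℂ A A]

def PseudoAmenable : Prop := PseudoAmenableSN A (fun a => ‖a‖)
def SeqPseudoAmenable : Prop := SeqPseudoAmenableSN A (fun a => ‖a‖)
def PseudoContractible : Prop := PseudoContractibleSN A (fun a => ‖a‖)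
def BddPseudoContractible : Prop := BddPseudoContractibleSN A (fun a => ‖a‖)

/-- `A` has a (two-sided) approximate identity. -/
def HasApproxIdentity : Prop :=
  ∃ (ι : Type) (φ : Filter ι) (e : ι → A), φ.NeBot ∧
    ∀ a : A, Tendsto (fun i => e i * a) φ (𝓝 a) ∧ Tendsto (fun i => a * e i) φ (𝓝 a)

/-- `A` has a bounded (two-sided) approximate identity. -/
def HasBoundedApproxIdentity : Prop :=
  ∃ (ι : Type) (φ : Filter ι) (e : ι → A), φ.NeBot ∧ (∃ C : ℝ, ∀ i, ‖e i‖ ≤ C) ∧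
    ∀ a : A, Tendsto (fun i => e i * a) φ (𝓝 a) ∧ Tendsto (fun i => a * e i) φ (𝓝 a)

/-- `A` has a left approximate identity. -/
def HasLeftApproxIdentity : Prop :=
  ∃ (ι : Type) (φ : Filter ι) (e : ι → A), φ.NeBot ∧
    ∀ a : A, Tendsto (fun i => e i * a) φ (𝓝 a)

/-- `A` has a right approximate identity. -/
def HasRightApproxIdentity : Prop :=
  ∃ (ι : Type) (φ : Filter ι) (e : ι → A), φ.NeBot ∧
    ∀ a : A, Tendsto (fun i => a * e i) φ (𝓝 a)

/-- `A` has a central approximate identity. -/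
def HasCentralApproxIdentity : Prop :=
  ∃ (ι : Type) (φ : Filter ι) (e : ι → A), φ.NeBot ∧
    (∀ (a : A) i, a * e i = e i * a) ∧
    ∀ a : A, Tendsto (fun i => e i * a) φ (𝓝 a)

/-- `A` is approximately biprojective: there is a net `(T_α)` of bounded `A`-bimodule morphisms
`A → A ⊗̂ A` with `π ∘ T_α (a) → a` for every `a`. -/
def ApproxBiprojective : Prop :=
  ∃ (ι : Type) (φ : Filter ι) (T : ι → (A →ₗ[ℂ] A ⊗[ℂ] A)), φ.NeBot ∧
    (∀ i, ∃ C : ℝ, ∀ a, projTensorSN (fun x : A => ‖x‖) (fun x : A => ‖x‖) (T i a) ≤ C * ‖a‖) ∧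
    (∀ i (a b : A), T i (a * b) = tactL A a (T i b) ∧ T i (a * b) = tactR A b (T i a)) ∧
    (∀ a : A, Tendsto (fun i => tpi A (T i a)) φ (𝓝 a))

end Normed


end

set_option linter.unusedSectionVars false

section Helpers

variable {A : Type} [NonUnitalNormedRing A] [NormedSpace ℂ A]
  [IsScalarTower ℂ A A] [SMulCommClass ℂ A A]

/-- The projective norm on the algebraic tensor square. -/
noncomputable def ptN (t : A ⊗[ℂ] A) : ℝ :=
  projTensorSN (fun a : A => ‖a‖) (fun a : A => ‖a‖) t

theorem ptN_exists_rep (t : A ⊗[ℂ] A) :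
    ∃ L : List (A × A), t = (L.map fun p => p.1 ⊗ₜ[ℂ] p.2).sum := by
  induction t using TensorProduct.induction_on with
  | zero => exact ⟨[], by simp⟩
  | tmul x y => exact ⟨[(x, y)], by simp⟩
  | add s t hs ht =>
    obtain ⟨L, hL⟩ := hs
    obtain ⟨L', hL'⟩ := ht
    exact ⟨L ++ L', by simp [hL, hL']⟩

theorem ptN_sum_nonneg (L : List (A × A)) : 0 ≤ (L.map fun p => ‖p.1‖ * ‖p.2‖).sum := by
  apply List.sum_nonneg
  intro x hx
  obtain ⟨p, -, rfl⟩ := List.mem_map.1 hx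
  positivity

theorem ptN_bdd (t : A ⊗[ℂ] A) :
    BddBelow {r : ℝ | ∃ L : List (A × A), t = (L.map fun p => p.1 ⊗ₜ[ℂ] p.2).sum ∧
      r = (L.map fun p => ‖p.1‖ * ‖p.2‖).sum} := by
  refine ⟨0, ?_⟩
  rintro r ⟨L, -, rfl⟩
  exact ptN_sum_nonneg L

theorem ptN_nonneg (t : A ⊗[ℂ] A) : 0 ≤ ptN t := by
  apply Real.sInf_nonneg
  rintro r ⟨L, -, rfl⟩
  exact ptN_sum_nonneg L

theorem ptN_le_list (L : List (A × A)) :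
    ptN (L.map fun p => p.1 ⊗ₜ[ℂ] p.2).sum ≤ (L.map fun p => ‖p.1‖ * ‖p.2‖).sum :=
  csInf_le (ptN_bdd _) ⟨L, rfl, rfl⟩

theorem ptN_tmul (x y : A) : ptN (x ⊗ₜ[ℂ] y) ≤ ‖x‖ * ‖y‖ := by
  simpa using ptN_le_list [(x, y)]

theorem le_ptN {p : A ⊗[ℂ] A → ℝ} {C : ℝ} (hC : 0 ≤ C) (h0 : p 0 ≤ 0)
    (hadd : ∀ s t, p (s + t) ≤ p s + p t)
    (htm : ∀ x y : A, p (x ⊗ₜ[ℂ] y) ≤ C * (‖x‖ * ‖y‖)) (t : A ⊗[ℂ] A) : p t ≤ C * ptN t := by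
  have key : ∀ L : List (A × A), p (L.map fun p => p.1 ⊗ₜ[ℂ] p.2).sum ≤
      C * (L.map fun p => ‖p.1‖ * ‖p.2‖).sum := by
    intro L
    induction L with
    | nil => simpa using h0
    | cons q L ih =>
      simp only [List.map_cons, List.sum_cons, mul_add]
      exact (hadd _ _).trans (add_le_add (htm _ _) ih)
  obtain ⟨L, hL⟩ := ptN_exists_rep t
  rcases hC.eq_or_lt with rfl | hC
  · have := key L
    rw [← hL] at this
    simpa using this
  · rw [← div_le_iff₀' hC]
    refine le_csInf ⟨_, L, hL, rfl⟩ ?_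
    rintro r ⟨L', h, rfl⟩
    rw [div_le_iff₀' hC, h]
    exact key L'

theorem ptN_zero : ptN (0 : A ⊗[ℂ] A) = 0 :=
  le_antisymm (by simpa using ptN_tmul (0 : A) 0) (ptN_nonneg _)

theorem ptN_add (s t : A ⊗[ℂ] A) : ptN (s + t) ≤ ptN s + ptN t := by
  apply le_of_forall_pos_le_add
  intro ε hε
  obtain ⟨L, hL⟩ := ptN_exists_rep s
  obtain ⟨L', hL'⟩ := ptN_exists_rep t
  obtain ⟨_, ⟨K, hK, rfl⟩, h1⟩ := Real.lt_sInf_add_pos (s := {r : ℝ | ∃ L : List (A × A),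
      s = (L.map fun p => p.1 ⊗ₜ[ℂ] p.2).sum ∧
      r = (L.map fun p => ‖p.1‖ * ‖p.2‖).sum}) ⟨_, L, hL, rfl⟩ (half_pos hε)
  obtain ⟨_, ⟨K', hK', rfl⟩, h2⟩ := Real.lt_sInf_add_pos (s := {r : ℝ | ∃ L : List (A × A),
      t = (L.map fun p => p.1 ⊗ₜ[ℂ] p.2).sum ∧
      r = (L.map fun p => ‖p.1‖ * ‖p.2‖).sum}) ⟨_, L', hL', rfl⟩ (half_pos hε)
  have h3 := ptN_le_list (K ++ K')
  simp only [List.map_append, List.sum_append, ← hK, ← hK'] at h3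
  unfold ptN projTensorSN at *
  linarith

theorem ptN_smul_le (c : ℂ) (t : A ⊗[ℂ] A) : ptN (c • t) ≤ ‖c‖ * ptN t := by
  refine le_ptN (p := fun t => ptN (c • t)) (norm_nonneg c) (by simp [ptN_zero])
    (fun s t => by simpa only [smul_add] using ptN_add _ _) (fun x y => ?_) t
  have := ptN_tmul (c • x) y
  rw [norm_smul, mul_assoc] at this
  exact this

theorem ptN_neg (t : A ⊗[ℂ] A) : ptN (-t) = ptN t := by
  have h : ∀ t : A ⊗[ℂ] A, ptN (-t) ≤ ptN t := fun t => by
    simpa using ptN_smul_le (-1) t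
  exact le_antisymm (h t) (by simpa using h (-t))

/-- The projective seminorm as a bundled group seminorm. -/
noncomputable def ptGS : AddGroupSeminorm (A ⊗[ℂ] A) where
  toFun := ptN
  map_zero' := ptN_zero
  add_le' := ptN_add
  neg' := ptN_neg

noncomputable instance ptSemi : SeminormedAddCommGroup (A ⊗[ℂ] A) :=
  AddGroupSeminorm.toSeminormedAddCommGroup ptGS

theorem pt_norm_eq (t : A ⊗[ℂ] A) :
    ‖t‖ = projTensorSN (fun a : A => ‖a‖) (fun a : A => ‖a‖) t := rfl

noncomputable instance ptNormedSpace : NormedSpace ℂ (A ⊗[ℂ] A) where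
  norm_smul_le := ptN_smul_le

theorem pt_norm_tmul_le (x y : A) : ‖x ⊗ₜ[ℂ] y‖ ≤ ‖x‖ * ‖y‖ := ptN_tmul x y

theorem pt_lin_bound {Z : Type} [SeminormedAddCommGroup Z] [NormedSpace ℂ Z]
    (f : A ⊗[ℂ] A →ₗ[ℂ] Z) {C : ℝ} (hC : 0 ≤ C)
    (h : ∀ x y : A, ‖f (x ⊗ₜ[ℂ] y)‖ ≤ C * (‖x‖ * ‖y‖)) (t : A ⊗[ℂ] A) : ‖f t‖ ≤ C * ‖t‖ :=
  le_ptN (p := fun t => ‖f t‖) hC (by simp)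
    (fun s t => by simpa only [map_add] using norm_add_le _ _) h t

theorem pt_map_bound (f g : A →ₗ[ℂ] A) {C C' : ℝ} (hC : 0 ≤ C) (hC' : 0 ≤ C')
    (hf : ∀ x, ‖f x‖ ≤ C * ‖x‖) (hg : ∀ x, ‖g x‖ ≤ C' * ‖x‖) (t : A ⊗[ℂ] A) :
    ‖TensorProduct.map f g t‖ ≤ C * C' * ‖t‖ := by
  refine pt_lin_bound _ (by positivity) (fun x y => ?_) t
  rw [TensorProduct.map_tmul]
  calc _ ≤ ‖f x‖ * ‖g y‖ := pt_norm_tmul_le _ _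
    _ ≤ (C * ‖x‖) * (C' * ‖y‖) := by
      gcongr
      · exact hf x
      · exact hg y
    _ = _ := by ring

theorem pt_tactL_bound (a : A) (t : A ⊗[ℂ] A) : ‖tactL A a t‖ ≤ ‖a‖ * ‖t‖ := by
  have := pt_map_bound (LinearMap.mulLeft ℂ a) LinearMap.id (norm_nonneg a) zero_le_one
    (fun x => norm_mul_le a x) (fun x => by simp) t
  simpa [tactL] using this

theorem pt_tactR_bound (a : A) (t : A ⊗[ℂ] A) : ‖tactR A a t‖ ≤ ‖a‖ * ‖t‖ := by
  have := pt_map_bound LinearMap.id (LinearMap.mulRight ℂ a) zero_le_one (norm_nonneg a)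
    (fun x => by simp) (fun x => by simpa [mul_comm ‖a‖] using norm_mul_le x a) t
  simpa [tactR] using this

theorem pt_tpi_bound (t : A ⊗[ℂ] A) : ‖tpi A t‖ ≤ ‖t‖ := by
  simpa using pt_lin_bound (tpi A) zero_le_one
    (fun x y => by simpa [tpi] using norm_mul_le x y) t

theorem tactL_tmul (a x y : A) : tactL A a (x ⊗ₜ[ℂ] y) = (a * x) ⊗ₜ[ℂ] y := rfl
theorem tactR_tmul (a x y : A) : tactR A a (x ⊗ₜ[ℂ] y) = x ⊗ₜ[ℂ] (y * a) := rfl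
theorem tpi_tmul (x y : A) : tpi A (x ⊗ₜ[ℂ] y) = x * y := rfl

theorem tpi_tactL (a : A) (t : A ⊗[ℂ] A) : tpi A (tactL A a t) = a * tpi A t := by
  induction t using TensorProduct.induction_on with
  | zero => simp
  | tmul x y => simp [tactL_tmul, tpi_tmul, mul_assoc]
  | add s t hs ht => simp [hs, ht, mul_add]

theorem tpi_tactR (a : A) (t : A ⊗[ℂ] A) : tpi A (tactR A a t) = tpi A t * a := by
  induction t using TensorProduct.induction_on with
  | zero => simp
  | tmul x y => simp [tactR_tmul, tpi_tmul, mul_assoc]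
  | add s t hs ht => simp [hs, ht, add_mul]

/-- Pointwise convergent sequences of operators are bounded. -/
theorem bs_seq [CompleteSpace A] {Z : Type} [SeminormedAddCommGroup Z] [NormedSpace ℂ Z]
    (g : ℕ → A →L[ℂ] Z) (z : A → Z) (h : ∀ a, Tendsto (fun n => g n a) atTop (𝓝 (z a))) :
    ∃ K : ℝ, 0 ≤ K ∧ ∀ n a, ‖g n a‖ ≤ K * ‖a‖ := by
  obtain ⟨C, hC⟩ := banach_steinhaus (g := g) (fun a => by
    obtain ⟨C, hC⟩ := (h a).norm.bddAbove_range
    exact ⟨C, fun i => hC ⟨i, rfl⟩⟩)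
  exact ⟨max C 0, le_max_right _ _, fun n a =>
    (g n).le_of_opNorm_le ((hC n).trans (le_max_left _ _)) a⟩

theorem backward [CompleteSpace A] (h1 : SeqPseudoAmenable A) (h2 : HasBoundedApproxIdentity A) :
    SeqApproximatelyContractible A := by
  obtain ⟨u, hu, hp⟩ := h1
  obtain ⟨ι, φ, e, hφ, ⟨C, hC⟩, he⟩ := h2
  set p : ℕ → A := fun n => tpi A (u n) with hpdef
  have hpl : ∀ a, Tendsto (fun n => p n * a) atTop (𝓝 a) := fun a =>
    tendsto_iff_norm_sub_tendsto_zero.2 (hp a)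
  have hpr : ∀ a, Tendsto (fun n => a * p n) atTop (𝓝 a) := by
    intro a
    have h3 : Tendsto (fun n => a * p n - p n * a) atTop (𝓝 0) := by
      refine squeeze_zero_norm (fun n => ?_) (hu a)
      have := pt_tpi_bound (tactL A a (u n) - tactR A a (u n))
      rw [map_sub, tpi_tactL, tpi_tactR] at this
      exact this
    simpa using h3.add (hpl a)
  obtain ⟨K, hK0, hK⟩ := bs_seq (fun n => (ContinuousLinearMap.mul ℂ A).flip (p n)) (fun a => a)
    (fun a => by simpa using hpr a)
  simp only [ContinuousLinearMap.flip_apply, ContinuousLinearMap.mul_apply'] at hK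
  -- the sequence is bounded
  have hpb : ∀ n, ‖p n‖ ≤ K * C := by
    intro n
    refine le_of_tendsto (he (p n)).1.norm (Eventually.of_forall fun i => ?_)
    exact (hK n _).trans (mul_le_mul_of_nonneg_left (hC i) hK0)
  intro X _ _ M D hD
  obtain ⟨Cl, hCl⟩ := M.l_bound
  obtain ⟨Cl, hCl, hCl0⟩ : ∃ Cl : ℝ, (∀ a, ‖M.l a‖ ≤ Cl * ‖a‖) ∧ 0 ≤ Cl :=
    ⟨max Cl 0, fun a => (hCl a).trans (by gcongr; exact le_max_left _ _), le_max_right _ _⟩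
  have hl : ∀ a x, ‖M.l a x‖ ≤ Cl * ‖a‖ * ‖x‖ := fun a x => (M.l a).le_of_opNorm_le (hCl a) x
  have hltend : ∀ (y : ℕ → A) (x : ℕ → X) (B : ℝ), Tendsto y atTop (𝓝 0) → (∀ n, ‖x n‖ ≤ B) →
      Tendsto (fun n => M.l (y n) (x n)) atTop (𝓝 0) := by
    intro y x B hy hB
    refine squeeze_zero_norm (a := fun n => Cl * ‖y n‖ * B) (fun n => (hl _ _).trans ?_) ?_
    · gcongr; exact hB n
    · simpa using (hy.norm.const_mul Cl).mul_const B
  have hltend' : ∀ (y : ℕ → A) (x : ℕ → X) (B : ℝ), Tendsto x atTop (𝓝 0) → (∀ n, ‖y n‖ ≤ B) →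
      Tendsto (fun n => M.l (y n) (x n)) atTop (𝓝 0) := by
    intro y x B hx hB
    refine squeeze_zero_norm (a := fun n => Cl * B * ‖x n‖) (fun n => (hl _ _).trans ?_) ?_
    · gcongr; exact hB n
    · simpa using hx.norm.const_mul (Cl * B)
  let L : A →ₗ[ℂ] X →ₗ[ℂ] X :=
    LinearMap.mk₂ ℂ (fun a x => M.l a x) (fun a b x => by simp [M.l_add])
      (fun c a x => by simp [M.l_smul]) (fun a x y => by simp) (fun c a x => by simp)
  let Φ : A ⊗[ℂ] A →ₗ[ℂ] X := TensorProduct.lift (L.compl₂ (D : A →ₗ[ℂ] X))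
  have hΦ : ∀ b c, Φ (b ⊗ₜ c) = M.l b (D c) := fun b c => rfl
  have hΦb : ∀ t, ‖Φ t‖ ≤ Cl * ‖D‖ * ‖t‖ := by
    refine pt_lin_bound Φ (by positivity) (fun x y => ?_)
    rw [hΦ]
    calc _ ≤ Cl * ‖x‖ * ‖D y‖ := hl _ _
      _ ≤ Cl * ‖x‖ * (‖D‖ * ‖y‖) := by gcongr; exact D.le_opNorm y
      _ = _ := by ring
  have hΦL : ∀ a t, Φ (tactL A a t) = M.l a (Φ t) := by
    intro a t
    induction t using TensorProduct.induction_on with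
    | zero => simp
    | tmul x y => simp [tactL_tmul, hΦ, M.l_mul]
    | add s t hs ht => simp [hs, ht]
  have hladd : ∀ a b x, M.l (a + b) x = M.l a x + M.l b x := fun a b x => by simp [M.l_add]
  have hΦR : ∀ a t, Φ (tactR A a t) = M.r a (Φ t) + M.l (tpi A t) (D a) := by
    intro a t
    induction t using TensorProduct.induction_on with
    | zero =>
      have : M.l 0 = 0 := by simpa using M.l_smul 0 0
      simp [this]
    | tmul x y =>
      have := congrArg (fun T => T (D y)) (M.lr_comm x a)
      simp only [ContinuousLinearMap.comp_apply] at this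
      rw [tactR_tmul, hΦ, hΦ, hD, tpi_tmul, M.l_mul]
      simp [this, add_comm]
    | add s t hs ht => simp only [map_add, hs, ht, hladd]; abel
  -- choose indices
  have hch : ∀ k : ℕ, ∃ n, k ≤ n ∧ ‖p n * p k - p k‖ ≤ 1 / ((k : ℝ) + 1) := by
    intro k
    have h3 := (tendsto_iff_norm_sub_tendsto_zero.1 (hpl (p k))).eventually
      (ge_mem_nhds (show (0 : ℝ) < 1 / ((k : ℝ) + 1) by positivity))
    exact ((eventually_ge_atTop k).and h3).exists
  choose n hn hnk using hch
  have hnt : Tendsto n atTop atTop := tendsto_atTop_mono hn tendsto_id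
  have hlsub : ∀ a b x, M.l (a - b) x = M.l a x - M.l b x := fun a b x => by
    have h := hladd (a - b) b x
    rw [sub_add_cancel] at h
    rw [h, add_sub_cancel_right]
  refine ⟨fun k => Φ (u (n k)) - D (p k) + M.l (p (n k)) (D (p k)), fun a => ?_⟩
  have E1 : Tendsto (fun k => Φ (tactL A a (u (n k)) - tactR A a (u (n k)))) atTop (𝓝 0) := by
    refine squeeze_zero_norm (fun k => hΦb _) ?_
    simp only [pt_norm_eq]
    simpa using ((hu a).comp hnt).const_mul (Cl * ‖D‖)
  have hd : Tendsto (fun k => D (p k * a - a)) atTop (𝓝 0) := by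
    have := (hpl a).sub_const a
    rw [sub_self] at this
    have h4 := (D.continuous.tendsto 0).comp this
    rw [map_zero] at h4
    exact h4
  have E3 : Tendsto (fun k => M.l (p (n k)) (D (p k * a - a))) atTop (𝓝 0) :=
    hltend' _ _ (K * C) hd (fun k => hpb _)
  have E4 : Tendsto (fun k => M.l (a * p (n k) - a) (D (p k))) atTop (𝓝 0) := by
    refine hltend _ _ (‖D‖ * (K * C)) ?_ (fun k => D.le_opNorm_of_le (hpb k))
    simpa using ((hpr a).comp hnt).sub_const a
  have E5 : Tendsto (fun k => M.l (p (n k) * p k - p k) (D a)) atTop (𝓝 0) := by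
    refine hltend _ _ ‖D a‖ ?_ (fun k => le_rfl)
    exact squeeze_zero_norm hnk tendsto_one_div_add_atTop_nhds_zero_nat
  have key : ∀ k, M.l a (Φ (u (n k)) - D (p k) + M.l (p (n k)) (D (p k))) -
      M.r a (Φ (u (n k)) - D (p k) + M.l (p (n k)) (D (p k))) =
      D a + Φ (tactL A a (u (n k)) - tactR A a (u (n k))) + D (p k * a - a) -
      M.l (p (n k)) (D (p k * a - a)) + M.l (a * p (n k) - a) (D (p k)) +
      M.l (p (n k) * p k - p k) (D a) := by
    intro k
    have hc := congrArg (fun T => T (D (p k))) (M.lr_comm (p (n k)) a)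
    simp only [ContinuousLinearMap.comp_apply] at hc
    have hr : M.r a (D (p k)) = D (p k * a) - M.l (p k) (D a) := by rw [hD]; abel
    simp only [map_sub, map_add, hΦL, hΦR, hlsub, M.l_mul, ContinuousLinearMap.comp_apply, ← hc, hr]
    simp only [hpdef]
    abel
  simp only [key]
  simpa using ((((tendsto_const_nhds (x := D a)).add E1).add hd).sub E3).add E4 |>.add E5

/-- Passing a continuous linear map to the separation quotient. -/
noncomputable def sqMap {Y : Type} [SeminormedAddCommGroup Y] [NormedSpace ℂ Y] (T : Y →L[ℂ] Y) :
    SeparationQuotient Y →L[ℂ] SeparationQuotient Y :=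
  SeparationQuotient.liftCLM ((SeparationQuotient.mkCLM ℂ Y).comp T)
    (fun _ _ h => SeparationQuotient.mk_eq_mk.2 (h.map T.continuous))

theorem sqMap_mk {Y : Type} [SeminormedAddCommGroup Y] [NormedSpace ℂ Y] (T : Y →L[ℂ] Y) (y : Y) :
    sqMap T (SeparationQuotient.mk y) = SeparationQuotient.mk (T y) := rfl

theorem sqMap_ext {Y : Type} [SeminormedAddCommGroup Y] [NormedSpace ℂ Y]
    {S T : SeparationQuotient Y →L[ℂ] SeparationQuotient Y}
    (h : ∀ y, S (SeparationQuotient.mk y) = T (SeparationQuotient.mk y)) : S = T := by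
  ext y
  obtain ⟨y, rfl⟩ := SeparationQuotient.surjective_mk y
  exact h y

theorem sqMap_norm {Y : Type} [SeminormedAddCommGroup Y] [NormedSpace ℂ Y] (T : Y →L[ℂ] Y) {C : ℝ}
    (hC : 0 ≤ C) (h : ∀ y, ‖T y‖ ≤ C * ‖y‖) : ‖sqMap T‖ ≤ C := by
  refine ContinuousLinearMap.opNorm_le_bound _ hC (fun y => ?_)
  obtain ⟨y, rfl⟩ := SeparationQuotient.surjective_mk y
  exact h y

theorem semi_apply (h : SeqApproximatelyContractible A) {Y : Type} [SeminormedAddCommGroup Y]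
    [NormedSpace ℂ Y] (l r : A →ₗ[ℂ] Y →ₗ[ℂ] Y) {C : ℝ} (hC : 0 ≤ C)
    (hl : ∀ a y, ‖l a y‖ ≤ C * ‖a‖ * ‖y‖) (hr : ∀ a y, ‖r a y‖ ≤ C * ‖a‖ * ‖y‖)
    (l_mul : ∀ a b y, l (a * b) y = l a (l b y)) (r_mul : ∀ a b y, r (a * b) y = r b (r a y))
    (lr : ∀ a b y, l a (r b y) = r b (l a y)) (D : A →L[ℂ] Y)
    (hD : ∀ a b, D (a * b) = l a (D b) + r b (D a)) :
    ∃ y : ℕ → Y, ∀ a, Tendsto (fun n => ‖l a (y n) - r a (y n) - D a‖) atTop (𝓝 0) := by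
  let l' : A → Y →L[ℂ] Y := fun a => (l a).mkContinuous (C * ‖a‖) (hl a)
  let r' : A → Y →L[ℂ] Y := fun a => (r a).mkContinuous (C * ‖a‖) (hr a)
  have hl' : ∀ a y, l' a y = l a y := fun a y => rfl
  have hr' : ∀ a y, r' a y = r a y := fun a y => rfl
  let M : BanachBimod A (SeparationQuotient Y) :=
    { l := fun a => sqMap (l' a)
      r := fun a => sqMap (r' a)
      l_add := fun a b => sqMap_ext fun y => by
        simp [sqMap_mk, hl', SeparationQuotient.mk_add]
      l_smul := fun c a => sqMap_ext fun y => by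
        simp [sqMap_mk, hl', SeparationQuotient.mk_smul]
      r_add := fun a b => sqMap_ext fun y => by
        simp [sqMap_mk, hr', SeparationQuotient.mk_add]
      r_smul := fun c a => sqMap_ext fun y => by
        simp [sqMap_mk, hr', SeparationQuotient.mk_smul]
      l_bound := ⟨C, fun a => sqMap_norm _ (by positivity) (hl a)⟩
      r_bound := ⟨C, fun a => sqMap_norm _ (by positivity) (hr a)⟩
      l_mul := fun a b => sqMap_ext fun y => by simp [sqMap_mk, hl', l_mul]
      r_mul := fun a b => sqMap_ext fun y => by simp [sqMap_mk, hr', r_mul]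
      lr_comm := fun a b => sqMap_ext fun y => by simp [sqMap_mk, hl', hr', lr] }
  obtain ⟨x, hx⟩ := h (SeparationQuotient Y) inferInstance inferInstance M
    ((SeparationQuotient.mkCLM ℂ Y).comp D) (fun a b => by
      change SeparationQuotient.mk (D (a * b)) = SeparationQuotient.mk (l a (D b)) +
        SeparationQuotient.mk (r b (D a))
      rw [hD, SeparationQuotient.mk_add])
  choose y hy using fun n => SeparationQuotient.surjective_mk (x n)
  refine ⟨y, fun a => ?_⟩
  have h1 := tendsto_iff_norm_sub_tendsto_zero.1 (hx a)
  refine h1.congr (fun n => ?_)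
  rw [← hy n]
  change ‖(SeparationQuotient.mk (l a (y n)) - SeparationQuotient.mk (r a (y n)) -
    SeparationQuotient.mk (D a))‖ = _
  rw [← SeparationQuotient.mk_sub, ← SeparationQuotient.mk_sub, SeparationQuotient.norm_mk]

theorem tactL_add' (a b : A) (t : A ⊗[ℂ] A) : tactL A (a + b) t = tactL A a t + tactL A b t := by
  induction t using TensorProduct.induction_on with
  | zero => simp
  | tmul x y => simp [tactL_tmul, add_mul, TensorProduct.add_tmul]
  | add s t hs ht => simp only [map_add, hs, ht]; abel

theorem tactL_smul' (c : ℂ) (a : A) (t : A ⊗[ℂ] A) : tactL A (c • a) t = c • tactL A a t := by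
  induction t using TensorProduct.induction_on with
  | zero => simp
  | tmul x y => rw [tactL_tmul, tactL_tmul, smul_mul_assoc, TensorProduct.smul_tmul']
  | add s t hs ht => simp only [map_add, hs, ht, smul_add]

theorem tactR_add' (a b : A) (t : A ⊗[ℂ] A) : tactR A (a + b) t = tactR A a t + tactR A b t := by
  induction t using TensorProduct.induction_on with
  | zero => simp
  | tmul x y => simp [tactR_tmul, mul_add, TensorProduct.tmul_add]
  | add s t hs ht => simp only [map_add, hs, ht]; abel

theorem tactR_smul' (c : ℂ) (a : A) (t : A ⊗[ℂ] A) : tactR A (c • a) t = c • tactR A a t := by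
  induction t using TensorProduct.induction_on with
  | zero => simp
  | tmul x y => rw [tactR_tmul, tactR_tmul, mul_smul_comm, TensorProduct.tmul_smul]
  | add s t hs ht => simp only [map_add, hs, ht, smul_add]

theorem tactL_mul' (a b : A) (t : A ⊗[ℂ] A) : tactL A (a * b) t = tactL A a (tactL A b t) := by
  induction t using TensorProduct.induction_on with
  | zero => simp
  | tmul x y => simp [tactL_tmul, mul_assoc]
  | add s t hs ht => simp only [map_add, hs, ht]

theorem tactR_mul' (a b : A) (t : A ⊗[ℂ] A) : tactR A (a * b) t = tactR A b (tactR A a t) := by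
  induction t using TensorProduct.induction_on with
  | zero => simp
  | tmul x y => simp [tactR_tmul, mul_assoc]
  | add s t hs ht => simp only [map_add, hs, ht]

theorem tactL_tactR (a b : A) (t : A ⊗[ℂ] A) :
    tactL A a (tactR A b t) = tactR A b (tactL A a t) := by
  induction t using TensorProduct.induction_on with
  | zero => simp
  | tmul x y => simp [tactR_tmul, tactL_tmul]
  | add s t hs ht => simp only [map_add, hs, ht]

theorem forward_data (h : SeqApproximatelyContractible A) :
    ∃ (m : ℕ → A ⊗[ℂ] A) (F G : ℕ → A), (∀ n, tpi A (m n) + F n + G n = 0) ∧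
      (∀ a, Tendsto (fun n => tactL A a (m n) - tactR A a (m n) + a ⊗ₜ[ℂ] G n - F n ⊗ₜ[ℂ] a)
        atTop (𝓝 0)) ∧
      (∀ a, Tendsto (fun n => a * F n) atTop (𝓝 a)) ∧
      (∀ a, Tendsto (fun n => G n * a) atTop (𝓝 a)) := by
  let l : A →ₗ[ℂ] ((A ⊗[ℂ] A) × A) →ₗ[ℂ] ((A ⊗[ℂ] A) × A) :=
    LinearMap.mk₂ ℂ (fun a y => (tactL A a y.1 - a ⊗ₜ[ℂ] (tpi A y.1 + y.2), a * y.2))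
      (fun a b y => by
        ext1
        · simp only [tactL_add', TensorProduct.add_tmul, Prod.fst_add]; abel
        · simp [add_mul])
      (fun c a y => by
        ext1
        · simp only [tactL_smul', ← TensorProduct.smul_tmul', Prod.smul_fst, smul_sub]
        · simp [smul_mul_assoc])
      (fun a y z => by
        ext1
        · simp only [map_add, TensorProduct.tmul_add, Prod.fst_add, Prod.snd_add]; abel
        · simp [mul_add])
      (fun c a y => by
        ext1
        · simp only [map_smul, Prod.smul_fst, Prod.smul_snd, smul_sub, ← smul_add,
            TensorProduct.tmul_smul]
        · simp [mul_smul_comm])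
  let r : A →ₗ[ℂ] ((A ⊗[ℂ] A) × A) →ₗ[ℂ] ((A ⊗[ℂ] A) × A) :=
    LinearMap.mk₂ ℂ (fun a y => (tactR A a y.1 + y.2 ⊗ₜ[ℂ] a, 0))
      (fun a b y => by
        ext1
        · simp only [tactR_add', TensorProduct.tmul_add, Prod.fst_add]; abel
        · simp)
      (fun c a y => by
        ext1
        · simp only [tactR_smul', TensorProduct.tmul_smul, Prod.smul_fst, smul_add]
        · simp)
      (fun a y z => by
        ext1
        · simp only [map_add, TensorProduct.add_tmul, Prod.fst_add, Prod.snd_add]; abel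
        · simp)
      (fun c a y => by
        ext1
        · simp only [map_smul, Prod.smul_fst, Prod.smul_snd, smul_add,
            ← TensorProduct.smul_tmul']
        · simp)
  have hlv : ∀ a y, l a y = (tactL A a y.1 - a ⊗ₜ[ℂ] (tpi A y.1 + y.2), a * y.2) :=
    fun a y => rfl
  have hrv : ∀ a y, r a y = (tactR A a y.1 + y.2 ⊗ₜ[ℂ] a, 0) := fun a y => rfl
  have n1 : ∀ y : (A ⊗[ℂ] A) × A, ‖y.1‖ ≤ ‖y‖ := fun y => norm_fst_le y
  have n2 : ∀ y : (A ⊗[ℂ] A) × A, ‖y.2‖ ≤ ‖y‖ := fun y => norm_snd_le y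
  obtain ⟨y, hy⟩ := semi_apply h l r (C := 3) (by norm_num)
    (fun a y => by
      rw [hlv]
      refine max_le ?_ ?_
      · calc _ ≤ ‖tactL A a y.1‖ + ‖a ⊗ₜ[ℂ] (tpi A y.1 + y.2)‖ := norm_sub_le _ _
          _ ≤ ‖a‖ * ‖y.1‖ + ‖a‖ * (‖y.1‖ + ‖y.2‖) := by
            gcongr
            · exact pt_tactL_bound _ _
            · refine (pt_norm_tmul_le _ _).trans ?_
              gcongr
              refine (norm_add_le _ _).trans ?_
              gcongr
              exact pt_tpi_bound _
          _ ≤ ‖a‖ * ‖y‖ + ‖a‖ * (‖y‖ + ‖y‖) := by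
            gcongr
            · exact n1 y
            · exact n1 y
            · exact n2 y
          _ = _ := by ring
      · calc _ ≤ ‖a‖ * ‖y.2‖ := norm_mul_le _ _
          _ ≤ ‖a‖ * ‖y‖ := by gcongr; exact n2 y
          _ ≤ _ := by nlinarith [mul_nonneg (norm_nonneg a) (norm_nonneg y)])
    (fun a y => by
      rw [hrv]
      refine max_le ?_ ?_
      · calc _ ≤ ‖tactR A a y.1‖ + ‖y.2 ⊗ₜ[ℂ] a‖ := norm_add_le _ _
          _ ≤ ‖a‖ * ‖y.1‖ + ‖y.2‖ * ‖a‖ := by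
            gcongr
            · exact pt_tactR_bound _ _
            · exact pt_norm_tmul_le _ _
          _ ≤ ‖a‖ * ‖y‖ + ‖y‖ * ‖a‖ := by
            gcongr
            · exact n1 y
            · exact n2 y
          _ ≤ _ := by nlinarith [mul_nonneg (norm_nonneg a) (norm_nonneg y)]
      · simp only [norm_zero]; positivity)
    (fun a b y => by
      simp only [hlv]
      ext1
      · simp [tactL_mul', tactL_tmul, tpi_tactL, tpi_tmul, mul_add]
      · simp [mul_assoc])
    (fun a b y => by
      simp only [hrv]
      ext1
      · simp [tactR_mul', tactR_tmul]
      · simp)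
    (fun a b y => by
      simp only [hrv, hlv]
      ext1
      · simp only [map_add, map_sub, tactL_tactR, tactL_tmul, tactR_tmul, tpi_tactR, tpi_tmul,
          add_zero, ← add_mul]
        abel
      · simp)
    (ContinuousLinearMap.inr ℂ (A ⊗[ℂ] A) A)
    (fun a b => by
      simp only [hrv, hlv]
      ext1 <;> simp)
  refine ⟨fun n => (y n).1, fun n => (y n).2, fun n => -(tpi A (y n).1 + (y n).2),
    fun n => add_neg_cancel _, ?_⟩
  have c1 : ∀ a, Tendsto (fun n => tactL A a (y n).1 - tactR A a (y n).1 +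
      a ⊗ₜ[ℂ] (-(tpi A (y n).1 + (y n).2)) - (y n).2 ⊗ₜ[ℂ] a) atTop (𝓝 0) := by
    intro a
    refine squeeze_zero_norm (fun n => ?_) (hy a)
    refine le_trans (le_of_eq ?_) (n1 _)
    congr 1
    simp only [hrv, hlv, Prod.fst_sub, TensorProduct.tmul_neg, ContinuousLinearMap.inr_apply]
    abel
  have c2 : ∀ a, Tendsto (fun n => a * (y n).2) atTop (𝓝 a) := by
    intro a
    rw [tendsto_iff_norm_sub_tendsto_zero]
    refine squeeze_zero (fun n => norm_nonneg _) (fun n => ?_) (hy a)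
    refine le_trans (le_of_eq ?_) (n2 _)
    congr 1
    simp only [hrv, hlv, Prod.snd_sub, ContinuousLinearMap.inr_apply, sub_zero]
  refine ⟨c1, c2, fun a => ?_⟩
  have c3 : Tendsto (fun n => tpi A (tactL A a (y n).1 - tactR A a (y n).1 +
      a ⊗ₜ[ℂ] (-(tpi A (y n).1 + (y n).2)) - (y n).2 ⊗ₜ[ℂ] a)) atTop (𝓝 0) :=
    squeeze_zero_norm (fun n => pt_tpi_bound _) (by simpa using (c1 a).norm)
  have c4 := c3.add (c2 a)
  rw [zero_add] at c4
  refine c4.congr (fun n => ?_)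
  simp only [map_add, map_sub, tpi_tactL, tpi_tactR, tpi_tmul]
  noncomm_ring

theorem pt_norm_tmul_ge (x y : A) : ‖x‖ * ‖y‖ ≤ ‖x ⊗ₜ[ℂ] y‖ := by
  obtain ⟨f, hf, hfy⟩ := exists_dual_vector'' ℂ y
  let S : A ⊗[ℂ] A →ₗ[ℂ] A := TensorProduct.lift
    (LinearMap.mk₂ ℂ (fun x y : A => f y • x) (fun a b c => by simp)
      (fun c a b => by rw [smul_comm]) (fun a b c => by simp [add_smul])
      (fun c a b => by simp [mul_smul]))
  have hS : ∀ x y, S (x ⊗ₜ y) = f y • x := fun x y => rfl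
  have := pt_lin_bound S zero_le_one (fun x y => by
    rw [hS, norm_smul, one_mul, mul_comm]
    gcongr
    simpa using f.le_of_opNorm_le hf y) (x ⊗ₜ y)
  rw [hS, hfy, norm_smul, one_mul] at this
  simpa [mul_comm] using this

/-- The operator `a ↦ a·m − m·a + a ⊗ g − f ⊗ a`. -/
noncomputable def opT (m : A ⊗[ℂ] A) (f g : A) : A →L[ℂ] A ⊗[ℂ] A :=
  LinearMap.mkContinuous
    { toFun := fun a => tactL A a m - tactR A a m + a ⊗ₜ[ℂ] g - f ⊗ₜ[ℂ] a
      map_add' := fun a b => by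
        simp only [tactL_add', tactR_add', TensorProduct.add_tmul, TensorProduct.tmul_add]
        abel
      map_smul' := fun c a => by
        simp only [tactL_smul', tactR_smul', ← TensorProduct.smul_tmul', TensorProduct.tmul_smul,
          smul_sub, smul_add, RingHom.id_apply] }
    (‖m‖ + ‖m‖ + ‖g‖ + ‖f‖) (fun a => by
      calc _ ≤ ‖tactL A a m‖ + ‖tactR A a m‖ + ‖a ⊗ₜ[ℂ] g‖ + ‖f ⊗ₜ[ℂ] a‖ :=
            (norm_sub_le _ _).trans (add_le_add_left ((norm_add_le _ _).trans
              (add_le_add_left (norm_sub_le _ _) _)) _)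
        _ ≤ ‖a‖ * ‖m‖ + ‖a‖ * ‖m‖ + ‖a‖ * ‖g‖ + ‖f‖ * ‖a‖ := by
            gcongr
            · exact pt_tactL_bound _ _
            · exact pt_tactR_bound _ _
            · exact pt_norm_tmul_le _ _
            · exact pt_norm_tmul_le _ _
        _ = _ := by ring)

theorem opT_apply (m : A ⊗[ℂ] A) (f g a : A) :
    opT m f g a = tactL A a m - tactR A a m + a ⊗ₜ[ℂ] g - f ⊗ₜ[ℂ] a := rfl

theorem tendsto_tactL {G : ℕ → A} (hG : ∀ a, Tendsto (fun n => G n * a) atTop (𝓝 a))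
    (t : A ⊗[ℂ] A) : Tendsto (fun j => tactL A (G j) t) atTop (𝓝 t) := by
  induction t using TensorProduct.induction_on with
  | zero => simp only [map_zero]; exact tendsto_const_nhds
  | tmul x y =>
    rw [tendsto_iff_norm_sub_tendsto_zero]
    refine squeeze_zero (fun n => norm_nonneg _) (g := fun j => ‖G j * x - x‖ * ‖y‖)
      (fun j => ?_) ?_
    · rw [tactL_tmul, ← TensorProduct.sub_tmul]
      exact pt_norm_tmul_le _ _
    · simpa using (tendsto_iff_norm_sub_tendsto_zero.1 (hG x)).mul_const ‖y‖
  | add s t hs ht => simpa only [map_add] using hs.add ht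

theorem tendsto_tactR {w : ℕ → A} {c : A} (hw : Tendsto w atTop (𝓝 c))
    (t : A ⊗[ℂ] A) : Tendsto (fun j => tactR A (w j) t) atTop (𝓝 (tactR A c t)) := by
  rw [tendsto_iff_norm_sub_tendsto_zero]
  refine squeeze_zero (fun n => norm_nonneg _) (g := fun j => ‖w j - c‖ * ‖t‖)
    (fun j => ?_) ?_
  · have h := tactR_add' (w j - c) c t
    rw [sub_add_cancel] at h
    rw [h, add_sub_cancel_right]
    exact pt_tactR_bound _ _
  · simpa using (tendsto_iff_norm_sub_tendsto_zero.1 hw).mul_const ‖t‖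

theorem bounded_FG [CompleteSpace A] (m : ℕ → A ⊗[ℂ] A) (F G : ℕ → A)
    (hT : ∀ a, Tendsto (fun n => tactL A a (m n) - tactR A a (m n) + a ⊗ₜ[ℂ] G n - F n ⊗ₜ[ℂ] a)
        atTop (𝓝 0))
    (hF : ∀ a, Tendsto (fun n => a * F n) atTop (𝓝 a))
    (hG : ∀ a, Tendsto (fun n => G n * a) atTop (𝓝 a)) :
    ∃ C, (∀ n, ‖F n‖ ≤ C) ∧ ∀ n, ‖G n‖ ≤ C := by
  obtain ⟨K1, hK1, h1⟩ := bs_seq (fun n => opT (m n) (F n) (G n)) (fun _ => 0) hT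
  obtain ⟨K2, hK2, h2⟩ := bs_seq (fun n => (ContinuousLinearMap.mul ℂ A).flip (F n)) (fun a => a)
    (fun a => by simpa using hF a)
  obtain ⟨K3, hK3, h3⟩ := bs_seq (fun n => ContinuousLinearMap.mul ℂ A (G n)) (fun a => a)
    (fun a => by simpa using hG a)
  simp only [ContinuousLinearMap.flip_apply, ContinuousLinearMap.mul_apply'] at h2 h3
  -- the error term
  let ε : ℕ → ℕ → ℕ → ℝ := fun n k j =>
    ‖tactL A (G j) (tactR A (F k) (m n)) - tactR A (G j * F k) (m n)‖
  have hε : ∀ n k, Tendsto (ε n k) atTop (𝓝 0) := by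
    intro n k
    have := (tendsto_tactL hG (tactR A (F k) (m n))).sub (tendsto_tactR (hG (F k)) (m n))
    simpa using this.norm
  have main : ∀ n k j, ‖G j ⊗ₜ[ℂ] (G n * F k) - F n ⊗ₜ[ℂ] (G j * F k)‖ ≤
      K2 * K1 * ‖G j‖ + ε n k j := by
    intro n k j
    have e1 : ‖tactR A (F k) (opT (m n) (F n) (G n) (G j))‖ ≤ K2 * (K1 * ‖G j‖) := by
      have := pt_map_bound LinearMap.id (LinearMap.mulRight ℂ (F k)) zero_le_one hK2
        (fun x => by simp) (fun x => h2 k x) (opT (m n) (F n) (G n) (G j))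
      rw [one_mul] at this
      exact this.trans (by gcongr; exact h1 n (G j))
    have e2 : G j ⊗ₜ[ℂ] (G n * F k) - F n ⊗ₜ[ℂ] (G j * F k) =
        tactR A (F k) (opT (m n) (F n) (G n) (G j)) -
        (tactL A (G j) (tactR A (F k) (m n)) - tactR A (G j * F k) (m n)) := by
      simp only [opT_apply, map_sub, map_add, tactR_tmul, tactL_tactR, tactR_mul']
      abel
    rw [e2]
    refine (norm_sub_le _ _).trans ?_
    rw [mul_assoc]
    gcongr
  have A1 : ∀ n k j, ‖G j‖ * ‖G n * F k‖ ≤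
      K2 * K1 * ‖G j‖ + ε n k j + ‖F n‖ * (K3 * ‖F k‖) := by
    intro n k j
    have e1 := pt_norm_tmul_ge (G j) (G n * F k)
    have e2 := norm_le_norm_sub_add (G j ⊗ₜ[ℂ] (G n * F k)) (F n ⊗ₜ[ℂ] (G j * F k))
    have e3 := pt_norm_tmul_le (F n) (G j * F k)
    have e4 := mul_le_mul_of_nonneg_left (h3 j (F k)) (norm_nonneg (F n))
    linarith [main n k j]
  have A2 : ∀ n k j, ‖F n‖ * ‖G j * F k‖ ≤
      K2 * K1 * ‖G j‖ + ε n k j + ‖G j‖ * ‖G n * F k‖ := by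
    intro n k j
    have e1 := pt_norm_tmul_ge (F n) (G j * F k)
    have e2 := norm_le_norm_sub_add (F n ⊗ₜ[ℂ] (G j * F k)) (G j ⊗ₜ[ℂ] (G n * F k))
    rw [norm_sub_rev] at e2
    have e3 := pt_norm_tmul_le (G j) (G n * F k)
    linarith [main n k j]
  have hGb : ∃ C, ∀ n, ‖G n‖ ≤ C := by
    by_contra! hcon
    have hnk : ∀ n k, ‖G n * F k‖ ≤ K2 * K1 := by
      intro n k
      by_contra! hlt
      obtain ⟨B, hB⟩ := (hε n k).bddAbove_range
      obtain ⟨j, hj⟩ := hcon ((B + ‖F n‖ * (K3 * ‖F k‖)) / (‖G n * F k‖ - K2 * K1))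
      rw [div_lt_iff₀ (by linarith)] at hj
      have hBj : ε n k j ≤ B := hB ⟨j, rfl⟩
      linarith [A1 n k j]
    obtain ⟨n, hn⟩ := hcon (K2 * K1)
    exact absurd (le_of_tendsto' (hF (G n)).norm (hnk n)) (not_le.2 hn)
  obtain ⟨C, hC⟩ := hGb
  have hC0 : 0 ≤ C := (norm_nonneg _).trans (hC 0)
  have hFF : ∀ n, ‖F n‖ * ‖F n‖ ≤ K2 * K1 * C + 0 + C * (K2 * C) := by
    intro n
    refine le_of_tendsto_of_tendsto' ((hG (F n)).norm.const_mul ‖F n‖)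
      (((hε n n).const_add (K2 * K1 * C)).add_const (C * (K2 * C))) (fun j => ?_)
    refine (A2 n n j).trans ?_
    gcongr
    · exact hC j
    · exact hC j
    · exact (h2 n (G n)).trans (by gcongr; exact hC n)
  refine ⟨max C (K2 * K1 * C + 0 + C * (K2 * C) + 1), fun n => le_max_of_le_right ?_,
    fun n => le_max_of_le_left (hC n)⟩
  nlinarith [hFF n, norm_nonneg (F n)]

/-- The inner sandwich `x ⊗ y ↦ x e ⊗ e y`. -/
noncomputable def sand (e : A) : A ⊗[ℂ] A →ₗ[ℂ] A ⊗[ℂ] A :=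
  TensorProduct.map (LinearMap.mulRight ℂ e) (LinearMap.mulLeft ℂ e)

theorem sand_tmul (e x y : A) : sand e (x ⊗ₜ[ℂ] y) = (x * e) ⊗ₜ[ℂ] (e * y) := rfl

theorem sand_bound (e : A) (t : A ⊗[ℂ] A) : ‖sand e t‖ ≤ ‖e‖ * ‖e‖ * ‖t‖ :=
  pt_map_bound _ _ (norm_nonneg e) (norm_nonneg e)
    (fun x => by simpa [mul_comm ‖e‖] using norm_mul_le x e) (fun x => norm_mul_le e x) t

theorem sand_tactL (e a : A) (t : A ⊗[ℂ] A) : sand e (tactL A a t) = tactL A a (sand e t) := by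
  induction t using TensorProduct.induction_on with
  | zero => simp
  | tmul x y => simp [tactL_tmul, sand_tmul, mul_assoc]
  | add s t hs ht => simp only [map_add, hs, ht]

theorem sand_tactR (e a : A) (t : A ⊗[ℂ] A) : sand e (tactR A a t) = tactR A a (sand e t) := by
  induction t using TensorProduct.induction_on with
  | zero => simp
  | tmul x y => simp [tactR_tmul, sand_tmul, mul_assoc]
  | add s t hs ht => simp only [map_add, hs, ht]

theorem tendsto_sand {e : ℕ → A} (hl : ∀ a, Tendsto (fun n => e n * a) atTop (𝓝 a))
    (hr : ∀ a, Tendsto (fun n => a * e n) atTop (𝓝 a)) (t : A ⊗[ℂ] A) :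
    Tendsto (fun k => tpi A (sand (e k) t)) atTop (𝓝 (tpi A t)) := by
  induction t using TensorProduct.induction_on with
  | zero => simp
  | tmul x y => simpa only [sand_tmul, tpi_tmul] using (hr x).mul (hl y)
  | add s t hs ht => simpa only [map_add] using hs.add ht

theorem forward [CompleteSpace A] (h : SeqApproximatelyContractible A) :
    SeqPseudoAmenable A ∧ HasBoundedApproxIdentity A := by
  obtain ⟨m, F, G, hm, hT, hF, hG⟩ := forward_data h
  obtain ⟨C, hFC, hGC⟩ := bounded_FG m F G hT hF hG
  have hC0 : 0 ≤ C := (norm_nonneg _).trans (hFC 0)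
  let E : ℕ → A := fun n => F n + G n - F n * G n
  have hEC : ∀ n, ‖E n‖ ≤ C + C + C * C := by
    intro n
    refine (norm_sub_le _ _).trans (add_le_add ((norm_add_le _ _).trans
      (add_le_add (hFC n) (hGC n))) ((norm_mul_le _ _).trans ?_))
    exact mul_le_mul (hFC n) (hGC n) (norm_nonneg _) hC0
  have hEr : ∀ a, Tendsto (fun n => a * E n) atTop (𝓝 a) := by
    intro a
    have h1 : Tendsto (fun n => (a * F n - a) * G n) atTop (𝓝 0) := by
      refine squeeze_zero_norm (a := fun n => ‖a * F n - a‖ * C) (fun n => ?_) ?_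
      · exact (norm_mul_le _ _).trans (by gcongr; exact hGC n)
      · simpa using (tendsto_iff_norm_sub_tendsto_zero.1 (hF a)).mul_const C
    have h2 := (hF a).sub h1
    rw [sub_zero] at h2
    refine h2.congr (fun n => ?_)
    simp only [E]
    noncomm_ring
  have hEl : ∀ a, Tendsto (fun n => E n * a) atTop (𝓝 a) := by
    intro a
    have h1 : Tendsto (fun n => F n * (G n * a - a)) atTop (𝓝 0) := by
      refine squeeze_zero_norm (a := fun n => C * ‖G n * a - a‖) (fun n => ?_) ?_
      · exact (norm_mul_le _ _).trans (by gcongr; exact hFC n)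
      · simpa using (tendsto_iff_norm_sub_tendsto_zero.1 (hG a)).const_mul C
    have h2 := (hG a).sub h1
    rw [sub_zero] at h2
    refine h2.congr (fun n => ?_)
    simp only [E]
    noncomm_ring
  refine ⟨?_, ℕ, atTop, E, inferInstance, ⟨_, hEC⟩, fun a => ⟨hEl a, hEr a⟩⟩
  -- the approximate diagonal
  let v : A → ℕ → A ⊗[ℂ] A := fun e n =>
    -sand e (m n) - (F n * e) ⊗ₜ[ℂ] e - e ⊗ₜ[ℂ] (e * G n) + e ⊗ₜ[ℂ] e
  have hv : ∀ n : ℕ, ∃ k, n ≤ k ∧ ‖tpi A (v (E k) n) - E k * E k‖ ≤ 1 / ((n : ℝ) + 1) := by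
    intro n
    have hs := tendsto_sand hEl hEr (m n)
    have h1 : Tendsto (fun k => F n * E k * E k) atTop (𝓝 (F n)) := by
      have : Tendsto (fun k => (F n * E k - F n) * E k) atTop (𝓝 0) := by
        refine squeeze_zero_norm (a := fun k => ‖F n * E k - F n‖ * (C + C + C * C))
          (fun n => ?_) ?_
        · exact (norm_mul_le _ _).trans (by gcongr; exact hEC _)
        · simpa using (tendsto_iff_norm_sub_tendsto_zero.1 (hEr (F n))).mul_const (C + C + C * C)
      simpa [sub_mul] using this.add (hEr (F n))
    have h2 : Tendsto (fun k => E k * (E k * G n)) atTop (𝓝 (G n)) := by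
      have : Tendsto (fun k => E k * (E k * G n - G n)) atTop (𝓝 0) := by
        refine squeeze_zero_norm (a := fun k => (C + C + C * C) * ‖E k * G n - G n‖)
          (fun n => ?_) ?_
        · exact (norm_mul_le _ _).trans (by gcongr; exact hEC _)
        · simpa using (tendsto_iff_norm_sub_tendsto_zero.1 (hEl (G n))).const_mul (C + C + C * C)
      simpa [mul_sub] using this.add (hEl (G n))
    have h3 := ((hs.add h1).add h2).norm
    rw [hm, norm_zero] at h3
    have h4 := h3.eventually (ge_mem_nhds (show (0 : ℝ) < 1 / ((n : ℝ) + 1) by positivity))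
    obtain ⟨k, hk, hk'⟩ := ((eventually_ge_atTop n).and h4).exists
    refine ⟨k, hk, le_trans (le_of_eq ?_) hk'⟩
    rw [← norm_neg]
    congr 1
    simp only [v, map_sub, map_add, map_neg, tpi_tmul]
    abel
  choose k hk hkn using hv
  have hkt : Tendsto k atTop atTop := tendsto_atTop_mono hk tendsto_id
  refine ⟨fun n => v (E (k n)) n, fun a => ?_, fun a => ?_⟩
  · have key : ∀ n, tactL A a (v (E (k n)) n) - tactR A a (v (E (k n)) n) =
        -sand (E (k n)) (opT (m n) (F n) (G n) a)
        - ((a * F n - a) * E (k n)) ⊗ₜ[ℂ] E (k n) + E (k n) ⊗ₜ[ℂ] (E (k n) * (G n * a - a)) := by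
      intro n
      simp only [v, opT_apply, map_sub, map_add, map_neg, sand_tactL, sand_tactR, tactL_tmul,
        tactR_tmul, sand_tmul, sub_mul, mul_sub, TensorProduct.sub_tmul, TensorProduct.tmul_sub,
        mul_assoc]
      abel
    set B := C + C + C * C with hB
    have hB0 : 0 ≤ B := by positivity
    have bound : ∀ n, ‖tactL A a (v (E (k n)) n) - tactR A a (v (E (k n)) n)‖ ≤
        B * B * ‖opT (m n) (F n) (G n) a‖ + ‖a * F n - a‖ * B * B + B * (B * ‖G n * a - a‖) := by
      intro n
      rw [key]
      refine (norm_add_le _ _).trans (add_le_add ((norm_sub_le _ _).trans (add_le_add ?_ ?_)) ?_)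
      · rw [norm_neg]
        refine (sand_bound _ _).trans ?_
        gcongr <;> exact hEC _
      · refine (pt_norm_tmul_le _ _).trans (mul_le_mul ((norm_mul_le _ _).trans ?_) (hEC _)
          (norm_nonneg _) (by positivity))
        gcongr; exact hEC _
      · refine (pt_norm_tmul_le _ _).trans (mul_le_mul (hEC _) ((norm_mul_le _ _).trans ?_)
          (norm_nonneg _) (by positivity))
        gcongr; exact hEC _
    refine squeeze_zero (fun n => norm_nonneg (tactL A a (v (E (k n)) n) -
      tactR A a (v (E (k n)) n))) bound ?_
    have t1 : Tendsto (fun n => ‖opT (m n) (F n) (G n) a‖) atTop (𝓝 0) := by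
      simpa [opT_apply] using (hT a).norm
    have t2 := tendsto_iff_norm_sub_tendsto_zero.1 (hF a)
    have t3 := tendsto_iff_norm_sub_tendsto_zero.1 (hG a)
    simpa using ((t1.const_mul (B * B)).add ((t2.mul_const B).mul_const B)).add
      ((t3.const_mul B).const_mul B)
  · refine tendsto_iff_norm_sub_tendsto_zero.1 ?_
    have h1 : Tendsto (fun n => tpi A (v (E (k n)) n) - E (k n) * E (k n)) atTop (𝓝 0) :=
      squeeze_zero_norm hkn tendsto_one_div_add_atTop_nhds_zero_nat
    have h2 : Tendsto (fun n => E n * (E n * a - a)) atTop (𝓝 0) := by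
      refine squeeze_zero_norm (a := fun k => (C + C + C * C) * ‖E k * a - a‖)
        (fun n => ?_) ?_
      · exact (norm_mul_le _ _).trans (by gcongr; exact hEC _)
      · simpa using (tendsto_iff_norm_sub_tendsto_zero.1 (hEl a)).const_mul (C + C + C * C)
    have h3 := ((h1.mul_const a).add (h2.comp hkt)).add ((hEl a).comp hkt)
    simp only [zero_mul, zero_add] at h3
    refine h3.congr (fun n => ?_)
    simp only [Function.comp]
    noncomm_ring

end Helpers

/-- A Banach algebra `A` is sequentially approximately contractible if and only
if `A` is sequentially pseudo-amenable and has a bounded approximate identity. -/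
theorem seqApproxContractible_iff_seqPseudoAmenable_and_bai
    (A : Type) [NonUnitalNormedRing A] [NormedSpace ℂ A]
    [IsScalarTower ℂ A A] [SMulCommClass ℂ A A] [CompleteSpace A] :
    SeqApproximatelyContractible A ↔ SeqPseudoAmenable A ∧ HasBoundedApproxIdentity A := by
  exact ⟨forward, fun h => backward h.1 h.2⟩
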